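/- Under the standing hypotheses, the striction curve σ(s) = r(s) − ⟪r'(s), e'(s)⟫·e(s) satisfies, for all s ∈ I: σ(s) × v₀(s) = v₁(s), σ(s) × n₀(s) = n₁(s), and σ(s) × t₀(s) = t₁(s). (In particular, σ(s) lies on each of the three lines corresponding to the unit dual vectors v̌(s), ň(s), ť(s).) -/

import Mathlib

noncomputable section
open scoped RealInnerProductSpace

/-- Euclidean 3-space `ℝ³`. -/
abbrev E3 : Type := EuclideanSpace ℝ (Fin 3)

/-- The cross product on `E3`. -/
def cross (u v : E3) : E3 :=
  (WithLp.equiv 2 (Fin 3 → ℝ)).symm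
    ![u 1 * v 2 - u 2 * v 1, u 2 * v 0 - u 0 * v 2, u 0 * v 1 - u 1 * v 0]

/-- Determinant of the 3×3 matrix with columns `u`, `v`, `w`. -/
def det3 (u v w : E3) : ℝ :=
  Matrix.det !![u 0, v 0, w 0; u 1, v 1, w 1; u 2, v 2, w 2]

namespace Ruled

/-- The director curve `e = v₀`. -/
def e (v₀ : ℝ → E3) : ℝ → E3 := v₀

/-- The base curve `r = v₀ × v₁`. -/
def r (v₀ v₁ : ℝ → E3) : ℝ → E3 := fun s => cross (v₀ s) (v₁ s)

/-- The parametrization `F(s,t) = r(s) + t • e(s)` of the ruled surface. -/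
def F (v₀ v₁ : ℝ → E3) (s t : ℝ) : E3 := r v₀ v₁ s + t • v₀ s

/-- `n₀ = v₀'`. -/
def n₀ (v₀ : ℝ → E3) : ℝ → E3 := fun s => deriv v₀ s

/-- `κ₁ = ⟪v₀', v₁'⟫`, the ε-part of the dual curvature. -/
def κ₁ (v₀ v₁ : ℝ → E3) : ℝ → ℝ := fun s => ⟪deriv v₀ s, deriv v₁ s⟫

/-- `n₁ = v₁' - κ₁ • v₀'`. -/
def n₁ (v₀ v₁ : ℝ → E3) : ℝ → E3 := fun s => deriv v₁ s - κ₁ v₀ v₁ s • deriv v₀ s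

/-- `t₀ = v₀ × n₀`. -/
def t₀ (v₀ : ℝ → E3) : ℝ → E3 := fun s => cross (v₀ s) (n₀ v₀ s)

/-- `t₁ = v₀ × n₁ + v₁ × n₀`. -/
def t₁ (v₀ v₁ : ℝ → E3) : ℝ → E3 :=
  fun s => cross (v₀ s) (n₁ v₀ v₁ s) + cross (v₁ s) (n₀ v₀ s)

/-- `τ₀ = ⟪n₀', t₀⟫`, the real part of the dual torsion. -/
def τ₀ (v₀ : ℝ → E3) : ℝ → ℝ := fun s => ⟪deriv (n₀ v₀) s, t₀ v₀ s⟫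

/-- `τ₁ = ⟪n₀', t₁⟫ + ⟪n₁', t₀⟫`, the ε-part of the dual torsion. -/
def τ₁ (v₀ v₁ : ℝ → E3) : ℝ → ℝ :=
  fun s => ⟪deriv (n₀ v₀) s, t₁ v₀ v₁ s⟫ + ⟪deriv (n₁ v₀ v₁) s, t₀ v₀ s⟫

/-- The striction curve `σ(s) = r(s) - ⟪r'(s), e'(s)⟫ • e(s)`. -/
def strict (v₀ v₁ : ℝ → E3) : ℝ → E3 :=
  fun s => r v₀ v₁ s - ⟪deriv (r v₀ v₁) s, deriv (e v₀) s⟫ • e v₀ s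

end Ruled

open Ruled

lemma inner3 (x y : E3) : ⟪x, y⟫ = x 0 * y 0 + x 1 * y 1 + x 2 * y 2 := by
  simp [PiLp.inner_apply, Fin.sum_univ_three]; ring

lemma cross_c0 (u v : E3) : cross u v 0 = u 1 * v 2 - u 2 * v 1 := rfl
lemma cross_c1 (u v : E3) : cross u v 1 = u 2 * v 0 - u 0 * v 2 := rfl
lemma cross_c2 (u v : E3) : cross u v 2 = u 0 * v 1 - u 1 * v 0 := rfl

lemma e3_ext {x y : E3} (h0 : x 0 = y 0) (h1 : x 1 = y 1) (h2 : x 2 = y 2) : x = y := by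
  ext i; fin_cases i <;> assumption

lemma cross_leibniz (u a p : E3) :
    cross u (cross a p) = cross a (cross u p) + cross (cross u a) p := by
  apply e3_ext <;> simp only [PiLp.add_apply, cross_c0, cross_c1, cross_c2] <;> ring

lemma hasDerivAt_e3 {f : ℝ → E3} {f' : E3} {s : ℝ} :
    HasDerivAt f f' s ↔ ∀ i, HasDerivAt (fun x => f x i) (f' i) s := by
  simp only [hasDerivAt_iff_hasFDerivAt, ← hasFDerivWithinAt_univ]
  rw [hasFDerivWithinAt_euclidean]
  refine forall_congr' fun i => ?_
  have : (PiLp.proj 2 (fun _ : Fin 3 => ℝ) i : E3 →L[ℝ] ℝ) ∘L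
      (ContinuousLinearMap.toSpanSingleton ℝ f') =
      ContinuousLinearMap.toSpanSingleton ℝ (f' i) := by
    ext; simp
  rw [this]

lemma hasDerivAt_coord {f : ℝ → E3} {f' : E3} {s : ℝ} (h : HasDerivAt f f' s) (i : Fin 3) :
    HasDerivAt (fun x => f x i) (f' i) s :=
  (hasDerivAt_e3.1 h) i

lemma hasDerivAt_cross {f g : ℝ → E3} {f' g' : E3} {s : ℝ} (hf : HasDerivAt f f' s)
    (hg : HasDerivAt g g' s) :
    HasDerivAt (fun x => cross (f x) (g x)) (cross f' (g s) + cross (f s) g') s := by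
  have F := hasDerivAt_coord hf
  have G := hasDerivAt_coord hg
  rw [hasDerivAt_e3]
  intro i
  fin_cases i
  · refine (((F 1).mul (G 2)).sub ((F 2).mul (G 1))).congr_deriv ?_
    simp [cross_c0]; ring
  · refine (((F 2).mul (G 0)).sub ((F 0).mul (G 2))).congr_deriv ?_
    simp [cross_c1]; ring
  · refine (((F 0).mul (G 1)).sub ((F 1).mul (G 0))).congr_deriv ?_
    simp [cross_c2]; ring

lemma alg1 (a b : E3) (c : ℝ) (h1 : ⟪a, a⟫ = 1) (h4 : ⟪a, b⟫ = 0) :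
    cross (cross a b - c • a) a = b := by
  rw [inner3] at h1 h4
  apply e3_ext <;>
    simp only [PiLp.sub_apply, PiLp.smul_apply, smul_eq_mul, cross_c0, cross_c1, cross_c2]
  · linear_combination b 0*h1 - a 0*h4
  · linear_combination b 1*h1 - a 1*h4
  · linear_combination b 2*h1 - a 2*h4

lemma alg2 (a b p q : E3) (h1 : ⟪a, a⟫ = 1) (h2 : ⟪p, p⟫ = 1) (h3 : ⟪a, p⟫ = 0)
    (h5 : ⟪a, q⟫ + ⟪p, b⟫ = 0) :
    cross (cross a b - ⟪cross p b + cross a q, p⟫ • a) p = q - ⟪p, q⟫ • p := by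
  simp only [inner3] at *
  apply e3_ext <;>
    simp only [PiLp.sub_apply, PiLp.add_apply, PiLp.smul_apply, smul_eq_mul,
      cross_c0, cross_c1, cross_c2]
  · linear_combination (b 0 + (a 0*q 0+a 1*q 1+a 2*q 2)*p 0 + (p 0*q 0+p 1*q 1+p 2*q 2)*a 0 - q 0*(a 0*p 0+a 1*p 1+a 2*p 2))*h3 - a 0*h5 - (a 0*q 0+a 1*q 1+a 2*q 2)*a 0*h2 - (p 0*q 0+p 1*q 1+p 2*q 2)*p 0*h1 + q 0*((p 0*p 0+p 1*p 1+p 2*p 2)*h1+h2)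
  · linear_combination (b 1 + (a 0*q 0+a 1*q 1+a 2*q 2)*p 1 + (p 0*q 0+p 1*q 1+p 2*q 2)*a 1 - q 1*(a 0*p 0+a 1*p 1+a 2*p 2))*h3 - a 1*h5 - (a 0*q 0+a 1*q 1+a 2*q 2)*a 1*h2 - (p 0*q 0+p 1*q 1+p 2*q 2)*p 1*h1 + q 1*((p 0*p 0+p 1*p 1+p 2*p 2)*h1+h2)
  · linear_combination (b 2 + (a 0*q 0+a 1*q 1+a 2*q 2)*p 2 + (p 0*q 0+p 1*q 1+p 2*q 2)*a 2 - q 2*(a 0*p 0+a 1*p 1+a 2*p 2))*h3 - a 2*h5 - (a 0*q 0+a 1*q 1+a 2*q 2)*a 2*h2 - (p 0*q 0+p 1*q 1+p 2*q 2)*p 2*h1 + q 2*((p 0*p 0+p 1*p 1+p 2*p 2)*h1+h2)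

/-- The striction curve satisfies `σ × v₀ = v₁`, `σ × n₀ = n₁` and `σ × t₀ = t₁`;
in particular `σ(s)` lies on the lines corresponding to `v̌(s)`, `ň(s)`, `ť(s)`. -/
theorem striction_curve_moments
    (I : Set ℝ) (v₀ v₁ : ℝ → E3)
    (hI : IsOpen I) (hI' : I.OrdConnected)
    (hv₀ : ContDiffOn ℝ (⊤ : ℕ∞) v₀ I) (hv₁ : ContDiffOn ℝ (⊤ : ℕ∞) v₁ I)
    (hunit : ∀ s ∈ I, ‖v₀ s‖ = 1) (horth : ∀ s ∈ I, ⟪v₀ s, v₁ s⟫ = 0)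
    (harc : ∀ s ∈ I, ‖deriv v₀ s‖ = 1) :
    ∀ s ∈ I,
      cross (strict v₀ v₁ s) (v₀ s) = v₁ s ∧
      cross (strict v₀ v₁ s) (n₀ v₀ s) = n₁ v₀ v₁ s ∧
      cross (strict v₀ v₁ s) (t₀ v₀ s) = t₁ v₀ v₁ s := by
  intro s hs
  have hn : I ∈ nhds s := hI.mem_nhds hs
  have d0 : HasDerivAt v₀ (deriv v₀ s) s :=
    ((hv₀.contDiffAt hn).differentiableAt (by simp)).hasDerivAt
  have d1 : HasDerivAt v₁ (deriv v₁ s) s :=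
    ((hv₁.contDiffAt hn).differentiableAt (by simp)).hasDerivAt
  have h1 : ⟪v₀ s, v₀ s⟫ = 1 := by rw [real_inner_self_eq_norm_sq, hunit s hs]; norm_num
  have h2 : ⟪deriv v₀ s, deriv v₀ s⟫ = 1 := by
    rw [real_inner_self_eq_norm_sq, harc s hs]; norm_num
  have h3 : ⟪v₀ s, deriv v₀ s⟫ = 0 := by
    have k := d0.inner ℝ d0
    have k' : HasDerivAt (fun x => ⟪v₀ x, v₀ x⟫) 0 s := by
      refine (hasDerivAt_const s (1 : ℝ)).congr_of_eventuallyEq ?_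
      filter_upwards [hn] with x hx
      rw [real_inner_self_eq_norm_sq, hunit x hx]; norm_num
    have := k.unique k'
    rw [real_inner_comm (v₀ s) (deriv v₀ s)] at this
    linarith [real_inner_comm (v₀ s) (deriv v₀ s)]
  have h5 : ⟪v₀ s, deriv v₁ s⟫ + ⟪deriv v₀ s, v₁ s⟫ = 0 := by
    have k := d0.inner ℝ d1
    have k' : HasDerivAt (fun x => ⟪v₀ x, v₁ x⟫) 0 s := by
      refine (hasDerivAt_const s (0 : ℝ)).congr_of_eventuallyEq ?_
      filter_upwards [hn] with x hx
      exact horth x hx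
    exact k.unique k'
  have hr : deriv (r v₀ v₁) s = cross (deriv v₀ s) (v₁ s) + cross (v₀ s) (deriv v₁ s) :=
    (hasDerivAt_cross d0 d1).deriv
  have A : cross (strict v₀ v₁ s) (v₀ s) = v₁ s := alg1 _ _ _ h1 (horth s hs)
  have B : cross (strict v₀ v₁ s) (n₀ v₀ s) = n₁ v₀ v₁ s := by
    have := alg2 (v₀ s) (v₁ s) (deriv v₀ s) (deriv v₁ s) h1 h2 h3 h5
    rw [← hr] at this
    exact this
  refine ⟨A, B, ?_⟩
  unfold t₀ t₁
  rw [cross_leibniz, A, B]
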